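/- For every finite set {u₁, …, uₙ} of wellformed sublevels there exists a unique subset {v₁, …, vₘ} ⊆ {u₁, …, uₙ} such that {v₁, …, vₘ} is a minimal representation and for every valuation σ, max(⟦u₁⟧σ, …, ⟦uₙ⟧σ) = max(⟦v₁⟧σ, …, ⟦vₘ⟧σ) (empty maxima being 0). -/

import Mathlib

/-- The impredicative maximum on natural numbers. -/
def imaxN : ℕ → ℕ → ℕ
  | _, 0 => 0
  | i, (j+1) => max i (j+1)

/-- Sublevels A(E,x,S) and B(E,S). -/
inductive SubLvl where
  | A : Finset ℕ → ℕ → ℕ → SubLvl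
  | B : Finset ℕ → ℕ → SubLvl
deriving DecidableEq

/-- Value of a sublevel under a valuation. -/
def evalS (σ : ℕ → ℕ) : SubLvl → ℕ
  | .A E x S => if ∃ y ∈ E, σ y = 0 then 0 else σ x + S
  | .B E S => if ∃ y ∈ E, σ y = 0 then 0 else S

/-- Wellformed sublevels. -/
def Wf : SubLvl → Prop
  | .A E x _ => x ∈ E
  | .B _ S => 0 < S

/-- Semantic comparison of sublevels. -/
def leT (u v : SubLvl) : Prop := ∀ σ : ℕ → ℕ, evalS σ u ≤ evalS σ v

/-- A minimal representation: a finite set of wellformed, pairwise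
incomparable sublevels. -/
def MinRep (U : Finset SubLvl) : Prop :=
  (∀ u ∈ U, Wf u) ∧ ∀ u ∈ U, ∀ v ∈ U, u ≠ v → ¬ leT u v

def leSyn : SubLvl → SubLvl → Prop
  | .A E x S, .A F y T => F ⊆ E ∧ x = y ∧ S ≤ T
  | .A _ _ _, .B _ _ => False
  | .B E S, .A F _ T => F ⊆ E ∧ S ≤ T + 1
  | .B E S, .B F T => F ⊆ E ∧ S ≤ T

def cst : SubLvl → ℕ
  | .A _ _ S => S
  | .B _ S => S

def tval (N : ℕ) : SubLvl → ℕ → ℕ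
  | .A E x _, y => if y ∈ E then (if y = x then N else 1) else 0
  | .B E _, y => if y ∈ E then 1 else 0

theorem leT_of_leSyn {u v : SubLvl} (hv : Wf v) (h : leSyn u v) : leT u v := by
  intro σ
  cases u with
  | A E x S =>
    cases v with
    | A F y T =>
      obtain ⟨h1, rfl, h3⟩ := h
      simp only [evalS]
      split_ifs with a b b
      · omega
      · omega
      · obtain ⟨z, hz, h0⟩ := b
        exact absurd ⟨z, h1 hz, h0⟩ a
      · omega
    | B F T => exact h.elim
  | B E S =>
    cases v with
    | A F y T =>
      obtain ⟨h1, h3⟩ := h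
      simp only [evalS]
      split_ifs with a b b
      · omega
      · omega
      · obtain ⟨z, hz, h0⟩ := b
        exact absurd ⟨z, h1 hz, h0⟩ a
      · have : σ y ≠ 0 := fun h0 => a ⟨y, h1 hv, h0⟩
        omega
    | B F T =>
      obtain ⟨h1, h3⟩ := h
      simp only [evalS]
      split_ifs with a b b
      · omega
      · omega
      · obtain ⟨z, hz, h0⟩ := b
        exact absurd ⟨z, h1 hz, h0⟩ a
      · omega

theorem leSyn_of_tval {u v : SubLvl} (hu : Wf u) (hv : Wf v) (N : ℕ) (hN : cst v + 1 < N)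
    (h : evalS (tval N u) u ≤ evalS (tval N u) v) : leSyn u v := by
  have hsub : ∀ E F : Finset ℕ, (∀ y, y ∉ E → tval N u y = 0) →
      ¬ (∃ y ∈ F, tval N u y = 0) → F ⊆ E := by
    intro E F h1 h2 y hy
    by_contra h3
    exact h2 ⟨y, hy, h1 y h3⟩
  cases u with
  | A E x S =>
    have hx : x ∈ E := hu
    have e1 : evalS (tval N (.A E x S)) (.A E x S) = N + S := by
      have : ¬ ∃ y ∈ E, tval N (.A E x S) y = 0 := by
        rintro ⟨y, hy, h0⟩
        simp only [tval, hy, if_true] at h0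
        split_ifs at h0
        omega
      simp only [evalS]
      rw [if_neg this]
      simp [tval, hx]
    rw [e1] at h
    have hs := fun F => hsub E F (fun y hy => by simp [tval, hy])
    cases v with
    | A F y T =>
      simp only [evalS] at h
      simp only [cst] at hN
      split_ifs at h with a
      · omega
      · have hF := hs F a
        have hy : y ∈ E := hF hv
        simp only [tval, hy, if_true] at h
        split_ifs at h with b
        · exact ⟨hF, b.symm, by omega⟩
        · omega
    | B F T =>
      simp only [evalS] at h
      simp only [cst] at hN
      split_ifs at h <;> omega
  | B E S =>
    have hS : 0 < S := hu
    have e1 : evalS (tval N (.B E S)) (.B E S) = S := by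
      have : ¬ ∃ y ∈ E, tval N (.B E S) y = 0 := by
        rintro ⟨y, hy, h0⟩
        simp [tval, hy] at h0
      simp only [evalS]
      rw [if_neg this]
    rw [e1] at h
    have hs := fun F => hsub E F (fun y hy => by simp [tval, hy])
    cases v with
    | A F y T =>
      simp only [evalS] at h
      split_ifs at h with a
      · omega
      · have hF := hs F a
        have hy : y ∈ E := hF hv
        simp only [tval, hy, if_true] at h
        exact ⟨hF, by omega⟩
    | B F T =>
      simp only [evalS] at h
      split_ifs at h with a
      · omega
      · exact ⟨hs F a, h⟩

theorem leSyn_of_leT {u v : SubLvl} (hu : Wf u) (hv : Wf v) (h : leT u v) : leSyn u v :=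
  leSyn_of_tval hu hv (cst v + 2) (by omega) (h _)

theorem leT_antisymm {u v : SubLvl} (hu : Wf u) (hv : Wf v) (h : leT u v) (h' : leT v u) :
    u = v := by
  have a := leSyn_of_leT hu hv h
  have b := leSyn_of_leT hv hu h'
  cases u <;> cases v <;> simp only [leSyn] at a b
  · obtain ⟨a1, a2, a3⟩ := a
    obtain ⟨b1, b2, b3⟩ := b
    rw [Finset.Subset.antisymm a1 b1, a2, le_antisymm a3 b3]
  · obtain ⟨a1, a3⟩ := a
    obtain ⟨b1, b3⟩ := b
    rw [Finset.Subset.antisymm a1 b1, le_antisymm a3 b3]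

theorem exists_leT_of_le_sup {u : SubLvl} {V : Finset SubLvl} (hu : Wf u) (hV : ∀ v ∈ V, Wf v)
    (h : ∀ σ, evalS σ u ≤ V.sup (evalS σ)) : ∃ v ∈ V, leT u v := by
  have hne : V.Nonempty := by
    rw [Finset.nonempty_iff_ne_empty]
    rintro rfl
    have h1 := h (fun _ => 1)
    cases u with
    | A E x S => simp [evalS] at h1
    | B E S =>
      have : 0 < S := hu
      simp [evalS] at h1
      omega
  obtain ⟨v, hv, e⟩ := Finset.exists_mem_eq_sup V hne (evalS (tval (V.sup cst + 2) u))
  have h1 := h (tval (V.sup cst + 2) u)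
  rw [e] at h1
  have h2 : cst v ≤ V.sup cst := Finset.le_sup hv
  exact ⟨v, hv, leT_of_leSyn (hV v hv) (leSyn_of_tval hu (hV v hv) _ (by omega) h1)⟩

theorem minrep_subset {V W : Finset SubLvl} (hV : MinRep V) (hW : MinRep W)
    (h : ∀ σ, V.sup (evalS σ) = W.sup (evalS σ)) : V ⊆ W := by
  intro v hv
  obtain ⟨w, hw, l1⟩ := exists_leT_of_le_sup (hV.1 v hv) hW.1
    (fun σ => h σ ▸ Finset.le_sup (f := evalS σ) hv)
  obtain ⟨v', hv', l2⟩ := exists_leT_of_le_sup (hW.1 w hw) hV.1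
    (fun σ => (h σ).symm ▸ Finset.le_sup (f := evalS σ) hw)
  have e : v = v' := by
    by_contra hne
    exact hV.2 v hv v' hv' hne (fun σ => (l1 σ).trans (l2 σ))
  subst e
  rwa [leT_antisymm (hV.1 v hv) (hW.1 w hw) l1 l2]

theorem exists_minrep (U : Finset SubLvl) (hU : ∀ u ∈ U, Wf u) :
    ∃ V : Finset SubLvl, V ⊆ U ∧ MinRep V ∧
      ∀ σ : ℕ → ℕ, U.sup (evalS σ) = V.sup (evalS σ) := by
  induction U using Finset.strongInduction with
  | H U ih =>
    by_cases hm : MinRep U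
    · exact ⟨U, subset_rfl, hm, fun _ => rfl⟩
    · have : ∃ u ∈ U, ∃ v ∈ U, u ≠ v ∧ leT u v := by
        by_contra hc
        exact hm ⟨hU, fun u hu v hv hne hl => hc ⟨u, hu, v, hv, hne, hl⟩⟩
      obtain ⟨u, hu, v, hv, hne, hl⟩ := this
      obtain ⟨V, h1, h2, h3⟩ := ih (U.erase u) (Finset.erase_ssubset hu)
        (fun w hw => hU w (Finset.mem_of_mem_erase hw))
      refine ⟨V, h1.trans (Finset.erase_subset _ _), h2, fun σ => ?_⟩
      rw [← h3 σ]
      apply le_antisymm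
      · apply Finset.sup_le
        intro w hw
        by_cases hwu : w = u
        · subst hwu
          exact (hl σ).trans
            (Finset.le_sup (f := evalS σ) (Finset.mem_erase.2 ⟨hne.symm, hv⟩))
        · exact Finset.le_sup (f := evalS σ) (Finset.mem_erase.2 ⟨hwu, hw⟩)
      · exact Finset.sup_mono (Finset.erase_subset _ _)

theorem exists_unique_minrep_subset (U : Finset SubLvl) (hU : ∀ u ∈ U, Wf u) :
    ∃! V : Finset SubLvl, V ⊆ U ∧ MinRep V ∧
      ∀ σ : ℕ → ℕ, U.sup (evalS σ) = V.sup (evalS σ) := by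
  obtain ⟨V, h1, h2, h3⟩ := exists_minrep U hU
  refine ⟨V, ⟨h1, h2, h3⟩, ?_⟩
  rintro W ⟨_, k2, k3⟩
  exact Finset.Subset.antisymm
    (minrep_subset k2 h2 fun σ => (k3 σ).symm.trans (h3 σ))
    (minrep_subset h2 k2 fun σ => (h3 σ).symm.trans (k3 σ))
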